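/- Let I ⊂ V be a 2-dimensional subspace with s|I×I = 0. Then for every v ∈ V⁺, the ℝ-linear map I → ℂ given by x ↦ s_ℂ(x⊗1, v) is bijective (i.e., the image of v in V_ℂ/I^⊥_ℂ ≅ Hom_ℝ(I,ℂ) has real rank 2). -/

import Mathlib

open TensorProduct Module

noncomputable section

instance : RingHomSurjective (starRingEnd ℂ) :=
  ⟨fun z => ⟨(starRingEnd ℂ) z, by simp⟩⟩

variable {V : Type*} [AddCommGroup V] [Module ℝ V]

/-- The conjugation of `V_ℂ = ℂ ⊗[ℝ] V` induced by complex conjugation on `ℂ`. -/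
def conjC (V : Type*) [AddCommGroup V] [Module ℝ V] :
    (ℂ ⊗[ℝ] V) →ₛₗ[starRingEnd ℂ] (ℂ ⊗[ℝ] V) where
  toFun := TensorProduct.map Complex.conjAe.toLinearMap LinearMap.id
  map_add' x y := map_add _ x y
  map_smul' c x := by
    induction x using TensorProduct.induction_on with
    | zero => simp
    | tmul z v =>
        simp [TensorProduct.smul_tmul', smul_eq_mul, map_mul]
    | add x y hx hy => simp_all [smul_add]

/-- The hermitian form `h(v,w) = s_ℂ(v, conj w)` associated to a real symmetric
bilinear form `s`. -/
def hermOrth (s : LinearMap.BilinForm ℝ V) (v w : ℂ ⊗[ℝ] V) : ℂ :=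
  (LinearMap.BilinForm.baseChange ℂ s) v (conjC V w)

/-- The set `V⁺ = {v ∈ V_ℂ : s_ℂ(v,v) = 0, h(v,v) > 0}`. -/
def Vplus (s : LinearMap.BilinForm ℝ V) : Set (ℂ ⊗[ℝ] V) :=
  {v | (LinearMap.BilinForm.baseChange ℂ s) v v = 0 ∧
    ∃ r : ℝ, 0 < r ∧ hermOrth s v v = r}

/-- A real symmetric bilinear form `s` has signature `(p,q)` on the subspace `V₀`: `V₀`
is an `s`-orthogonal direct sum of a `p`-dimensional subspace on which `s` is positive
definite and a `q`-dimensional subspace on which `s` is negative definite. -/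
def RealSig {U : Type*} [AddCommGroup U] [Module ℝ U]
    (s : LinearMap.BilinForm ℝ U) (U₀ : Submodule ℝ U) (p q : ℕ) : Prop :=
  ∃ P N : Submodule ℝ U, P ≤ U₀ ∧ N ≤ U₀ ∧ P ⊓ N = ⊥ ∧ P ⊔ N = U₀ ∧
    Module.finrank ℝ P = p ∧ Module.finrank ℝ N = q ∧
    (∀ v ∈ P, ∀ w ∈ N, s v w = 0) ∧
    (∀ v ∈ P, v ≠ 0 → 0 < s v v) ∧
    (∀ w ∈ N, w ≠ 0 → s w w < 0)

/-! Write `v = a + i b` with `a, b ∈ V`. The conditions `s_ℂ(v, v) = 0` and `h(v, v) > 0` say that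
`a` and `b` are orthogonal of the same positive square, so they span a positive definite plane `W`.
In signature `(2, n)` the plane `W` is a complement of a negative definite subspace, which forces
`s` to be negative definite on `Wᗮ`. But `Wᗮ` is the kernel of `x ↦ s_ℂ(x ⊗ 1, v)`, so this map is
injective on every subspace where `s` takes no negative value, and bijective onto `ℂ` if that
subspace is a plane. -/

section DefiniteSubspaces

theorem apply_sum_smul_self_of_iIsOrtho {R M ι : Type*} [CommSemiring R] [AddCommMonoid M]
    [Module R M] [Fintype ι] {B : LinearMap.BilinForm R M} {u : ι → M} (hu : B.iIsOrtho u)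
    (c : ι → R) :
    B (∑ i, c i • u i) (∑ i, c i • u i) = ∑ i, c i ^ 2 * B (u i) (u i) := by
  classical
  simp only [map_sum, LinearMap.sum_apply, map_smul, LinearMap.smul_apply, smul_eq_mul]
  refine Finset.sum_congr rfl fun i _ ↦ ?_
  rw [Finset.sum_eq_single i (fun j _ hj ↦ by simp [hu hj]) (by simp)]
  ring

theorem codisjoint_of_disjoint_of_finrank_quotient_eq {K E : Type*} [DivisionRing K]
    [AddCommGroup E] [Module K E] {W N : Submodule K E} [FiniteDimensional K (E ⧸ N)]
    (hWN : Disjoint W N) (hrank : finrank K W = finrank K (E ⧸ N)) : Codisjoint W N := by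
  have hinj : Function.Injective (N.mkQ.domRestrict W) := by
    simpa [LinearMap.injective_domRestrict_iff, disjoint_iff, inf_comm] using hWN
  have : FiniteDimensional K W := Module.Finite.of_injective _ hinj
  have hsurj : Function.Surjective (N.mkQ.domRestrict W) :=
    (LinearMap.injective_iff_surjective_of_finrank_eq_finrank hrank).1 hinj
  simpa using (LinearMap.surjective_domRestrict_iff N.mkQ_surjective).1 hsurj

variable {K E : Type*} [Field K] [LinearOrder K] [AddCommGroup E] [Module K E]
  {B : LinearMap.BilinForm K E} {W N : Submodule K E}

theorem disjoint_of_nonneg_of_neg (hW : ∀ w ∈ W, 0 ≤ B w w)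
    (hN : ∀ w ∈ N, w ≠ 0 → B w w < 0) : Disjoint W N := by
  refine Submodule.disjoint_def.2 fun w hwW hwN ↦ ?_
  by_contra hw
  exact (hN w hwN hw).not_ge (hW w hwW)

variable [IsStrictOrderedRing K]

theorem neg_of_mem_orthogonal_of_codisjoint (hB : B.IsRefl) (hWN : Codisjoint W N)
    (hW : ∀ w ∈ W, w ≠ 0 → 0 < B w w) (hN : ∀ w ∈ N, w ≠ 0 → B w w < 0)
    {x : E} (hx : x ∈ B.orthogonal W) (hx0 : x ≠ 0) : B x x < 0 := by
  obtain ⟨w, m, hw, hm, rfl⟩ := Submodule.codisjoint_iff_exists_add_eq.1 hWN x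
  have hwx : B w (w + m) = 0 := hx w hw
  have hxw : B (w + m) w = 0 := hB _ _ hwx
  have hmm : B m m = B (w + m) (w + m) + B w w := by
    simp only [map_add, LinearMap.add_apply] at hwx hxw ⊢
    linear_combination -hwx - hxw
  rcases eq_or_ne w 0 with rfl | hw0
  · simpa using hN m hm (by simpa using hx0)
  · have hm0 : B m m ≤ 0 := by
      rcases eq_or_ne m 0 with rfl | hm0
      · simp
      · exact (hN m hm hm0).le
    linarith [hW w hw hw0]

variable {ι : Type*} {u : ι → E}

theorem pos_of_mem_span_range_of_iIsOrtho [Finite ι] (hu : B.iIsOrtho u)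
    (hpos : ∀ i, 0 < B (u i) (u i)) {w : E} (hw : w ∈ Submodule.span K (Set.range u))
    (hw0 : w ≠ 0) : 0 < B w w := by
  cases nonempty_fintype ι
  obtain ⟨c, rfl⟩ := (Submodule.mem_span_range_iff_exists_fun K).1 hw
  obtain ⟨i, -, hi⟩ := Finset.exists_ne_zero_of_sum_ne_zero hw0
  rw [apply_sum_smul_self_of_iIsOrtho hu]
  have hci : c i ≠ 0 := fun h ↦ hi (by simp [h])
  exact Finset.sum_pos' (fun j _ ↦ mul_nonneg (sq_nonneg _) (hpos j).le)
    ⟨i, Finset.mem_univ i, mul_pos (sq_pos_of_ne_zero hci) (hpos i)⟩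

theorem neg_of_forall_apply_eq_zero_of_iIsOrtho [Fintype ι] (hB : B.IsRefl)
    [FiniteDimensional K (E ⧸ N)] (hN : ∀ w ∈ N, w ≠ 0 → B w w < 0)
    (hcard : Fintype.card ι = finrank K (E ⧸ N))
    (hu : B.iIsOrtho u) (hpos : ∀ i, 0 < B (u i) (u i))
    {x : E} (hx : ∀ i, B (u i) x = 0) (hx0 : x ≠ 0) : B x x < 0 := by
  set W := Submodule.span K (Set.range u)
  have hW : ∀ w ∈ W, w ≠ 0 → 0 < B w w := fun w ↦ pos_of_mem_span_range_of_iIsOrtho hu hpos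
  have hW_nonneg : ∀ w ∈ W, 0 ≤ B w w := fun w hw ↦ by
    rcases eq_or_ne w 0 with rfl | hw0
    · simp
    · exact (hW w hw hw0).le
  have hlin : LinearIndependent K u :=
    LinearMap.BilinForm.linearIndependent_of_iIsOrtho hu fun i ↦ (hpos i).ne'
  have hWN : Codisjoint W N :=
    codisjoint_of_disjoint_of_finrank_quotient_eq (disjoint_of_nonneg_of_neg hW_nonneg hN)
      ((finrank_span_eq_card hlin).trans hcard)
  have hWx : W ≤ LinearMap.ker (B.flip x) := Submodule.span_le.2 (Set.range_subset_iff.2 hx)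
  exact neg_of_mem_orthogonal_of_codisjoint hB hWN hW hN (fun w hw ↦ hWx hw) hx0

end DefiniteSubspaces

section Complexification

theorem exists_eq_one_tmul_add_I_tmul (v : ℂ ⊗[ℝ] V) :
    ∃ a b : V, v = (1 : ℂ) ⊗ₜ[ℝ] a + Complex.I ⊗ₜ[ℝ] b := by
  induction v using TensorProduct.induction_on with
  | zero => exact ⟨0, 0, by simp⟩
  | tmul z w =>
    have hz : z = z.re • (1 : ℂ) + z.im • Complex.I := by simp [Complex.re_add_im]
    refine ⟨z.re • w, z.im • w, ?_⟩
    rw [← TensorProduct.smul_tmul, ← TensorProduct.smul_tmul, ← TensorProduct.add_tmul, ← hz]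
  | add x y hx hy =>
    obtain ⟨a, b, rfl⟩ := hx
    obtain ⟨c, d, rfl⟩ := hy
    refine ⟨a + c, b + d, ?_⟩
    rw [TensorProduct.tmul_add, TensorProduct.tmul_add, add_add_add_comm]

theorem conjC_one_tmul_add_I_tmul (a b : V) :
    conjC V ((1 : ℂ) ⊗ₜ[ℝ] a + Complex.I ⊗ₜ[ℝ] b) =
      (1 : ℂ) ⊗ₜ[ℝ] a + Complex.I ⊗ₜ[ℝ] (-b) := by
  simp [conjC, TensorProduct.neg_tmul, TensorProduct.tmul_neg]

variable (s : LinearMap.BilinForm ℝ V)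

theorem baseChange_one_tmul_add_I_tmul (a b c d : V) :
    LinearMap.BilinForm.baseChange ℂ s ((1 : ℂ) ⊗ₜ[ℝ] a + Complex.I ⊗ₜ[ℝ] b)
      ((1 : ℂ) ⊗ₜ[ℝ] c + Complex.I ⊗ₜ[ℝ] d) = ⟨s a c - s b d, s a d + s b c⟩ := by
  apply Complex.ext <;> simp [sub_eq_add_neg, add_comm]

/-- The real-linear map `x ↦ s_ℂ(x ⊗ 1, v)` from `V` to `ℂ`. Restricted to a subspace `I` it is the
element of `Hom_ℝ(I, ℂ)` that represents `v` modulo `I^⊥_ℂ`. -/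
def complexPairing (v : ℂ ⊗[ℝ] V) : V →ₗ[ℝ] ℂ :=
  ((LinearMap.BilinForm.baseChange ℂ s).flip v).restrictScalars ℝ ∘ₗ TensorProduct.mk ℝ ℂ V 1

theorem complexPairing_one_tmul_add_I_tmul (a b x : V) :
    complexPairing s ((1 : ℂ) ⊗ₜ[ℝ] a + Complex.I ⊗ₜ[ℝ] b) x = ⟨s x a, s x b⟩ := by
  simpa [complexPairing] using baseChange_one_tmul_add_I_tmul s x 0 a b

variable {s}

theorem one_tmul_add_I_tmul_mem_Vplus_iff {a b : V} :
    (1 : ℂ) ⊗ₜ[ℝ] a + Complex.I ⊗ₜ[ℝ] b ∈ Vplus s ↔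
      0 < s a a ∧ s b b = s a a ∧ s a b = 0 ∧ s b a = 0 := by
  simp only [Vplus, hermOrth, Set.mem_ofPred_eq, conjC_one_tmul_add_I_tmul,
    baseChange_one_tmul_add_I_tmul, Complex.ext_iff, map_neg, Complex.zero_re, Complex.zero_im,
    Complex.ofReal_re, Complex.ofReal_im]
  constructor
  · rintro ⟨⟨hre, him⟩, r, hr, hre', him'⟩
    refine ⟨?_, ?_, ?_, ?_⟩ <;> linarith
  · rintro ⟨haa, hbb, hab, hba⟩
    refine ⟨⟨?_, ?_⟩, s a a + s b b, ?_, ?_, ?_⟩ <;> linarith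

variable {N : Submodule ℝ V}

theorem neg_of_complexPairing_eq_zero (hs : s.IsRefl) (hN : ∀ w ∈ N, w ≠ 0 → s w w < 0)
    (hcodim : finrank ℝ (V ⧸ N) = 2) {v : ℂ ⊗[ℝ] V} (hv : v ∈ Vplus s)
    {x : V} (hx : complexPairing s v x = 0) (hx0 : x ≠ 0) : s x x < 0 := by
  obtain ⟨a, b, rfl⟩ := exists_eq_one_tmul_add_I_tmul v
  obtain ⟨haa, hbb, hab, hba⟩ := one_tmul_add_I_tmul_mem_Vplus_iff.1 hv
  rw [complexPairing_one_tmul_add_I_tmul] at hx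
  have hax : s a x = 0 := hs _ _ (congrArg Complex.re hx)
  have hbx : s b x = 0 := hs _ _ (congrArg Complex.im hx)
  have : FiniteDimensional ℝ (V ⧸ N) := .of_finrank_eq_succ hcodim
  refine neg_of_forall_apply_eq_zero_of_iIsOrtho (u := ![a, b]) hs hN (by simp [hcodim])
    ?_ ?_ ?_ hx0
  · intro i j hij
    fin_cases i <;> fin_cases j <;> simp_all [Function.onFun]
  · simpa [Fin.forall_fin_two, hbb] using haa
  · simp [Fin.forall_fin_two, hax, hbx]

theorem rank_two_projection_on_isotropic_plane_general
    (hs : s.IsRefl) (hN : ∀ w ∈ N, w ≠ 0 → s w w < 0) (hcodim : finrank ℝ (V ⧸ N) = 2)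
    {I : Submodule ℝ V} (hIdim : finrank ℝ I = 2) (hI : ∀ x ∈ I, 0 ≤ s x x)
    {v : ℂ ⊗[ℝ] V} (hv : v ∈ Vplus s) :
    Function.Bijective ((complexPairing s v).domRestrict I) := by
  have hinj : Function.Injective ((complexPairing s v).domRestrict I) := by
    refine (injective_iff_map_eq_zero _).2 fun x hx ↦ ?_
    by_contra hx0
    exact (neg_of_complexPairing_eq_zero hs hN hcodim hv hx (by simpa using hx0)).not_ge
      (hI x x.2)
  have : FiniteDimensional ℝ I := .of_finrank_eq_succ hIdim
  have hrank : finrank ℝ I = finrank ℝ ℂ := by rw [hIdim, Complex.finrank_real_complex]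
  exact ⟨hinj, (LinearMap.injective_iff_surjective_of_finrank_eq_finrank hrank).1 hinj⟩

end Complexification

/-- let `I ⊂ V` be a 2-dimensional subspace with `s|I×I = 0`.  Then for
every `v ∈ V⁺` the `ℝ`-linear map `I → ℂ`, `x ↦ s_ℂ(x⊗1, v)`, is bijective (i.e. the
image of `v` in `V_ℂ/I^⊥_ℂ ≅ Hom_ℝ(I,ℂ)` has real rank 2). -/
theorem rank_two_projection_on_isotropic_plane
    [FiniteDimensional ℝ V] (n : ℕ) (hn : 2 ≤ n)
    (hdim : Module.finrank ℝ V = n + 2)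
    (s : LinearMap.BilinForm ℝ V) (hsymm : LinearMap.IsSymm s)
    (hnd : LinearMap.BilinForm.Nondegenerate s)
    (hsig : RealSig s ⊤ 2 n)
    (I : Submodule ℝ V) (hIdim : Module.finrank ℝ I = 2)
    (hIiso : ∀ x ∈ I, ∀ y ∈ I, s x y = 0)
    (v : ℂ ⊗[ℝ] V) (hv : v ∈ Vplus s) :
    Function.Bijective
      (fun x : I => (LinearMap.BilinForm.baseChange ℂ s) ((1 : ℂ) ⊗ₜ[ℝ] (x : V)) v) := by
  obtain ⟨_, N, -, -, -, -, -, hNdim, -, -, hN⟩ := hsig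
  have hcodim : finrank ℝ (V ⧸ N) = 2 := by
    have := N.finrank_quotient_add_finrank
    omega
  exact rank_two_projection_on_isotropic_plane_general hsymm.isRefl hN hcodim hIdim
    (fun x hx ↦ (hIiso x hx x hx).ge) hv

end
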